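/- Assume ζ₀ := ū^{in}/u_s > 1, and let (u₀, E₀) ∈ T_acc with 0 < u₀ < u_s (so E₀ = −√(2H(u₀)) ≤ 0). Then there exist a finite constant l_max > 0 and a function (ū₁, Ē) : [0, l_max] → ℝ², infinitely differentiable on [0, l_max], with ū₁ > 0 everywhere, (ū₁, Ē)(0) = (u₀, E₀), satisfying (ū₁^{γ+1} − u_s^{γ+1})·ū₁' = Ē·ū₁^γ and Ē' = J/ū₁ − ρ̄^{in} on [0, l_max], such that: (i) ū₁'(x₁) > 0 for all x₁ ∈ [0, l_max); and (ii) ū₁'(x₁) → 0 as x₁ → l_max⁻. Moreover this smooth solution is unique: any other smooth solution of the same system with the same initial data agrees with (ū₁, Ē) on the common interval of definition. -/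

import Mathlib

open Set Filter intervalIntegral

/-- The sonic speed `u_s = (γ S₀ J^{γ−1})^{1/(γ+1)}`. -/
noncomputable def usonic (γ S₀ J : ℝ) : ℝ :=
  (γ * S₀ * J ^ (γ - 1)) ^ (1 / (γ + 1))

/-- `ū^{in} = J / ρ̄^{in}`. -/
noncomputable def uIn (ρin J : ℝ) : ℝ := J / ρin

/-- `H(u) = (J/ū^{in}) ∫_{u_s}^{u} t^{−(γ+1)} (t^{γ+1} − u_s^{γ+1})(ū^{in} − t) dt`. -/
noncomputable def Hfun (γ ρin S₀ J : ℝ) (u : ℝ) : ℝ :=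
  (J / uIn ρin J) *
    ∫ t in usonic γ S₀ J..u,
      t ^ (-(γ + 1)) * ((t ^ (γ + 1) - usonic γ S₀ J ^ (γ + 1)) * (uIn ρin J - t))

/-- The critical trajectory `T = {(u,E) ∈ (0,∞) × ℝ : ½E² − H(u) = 0}`. -/
def critTraj (γ ρin S₀ J : ℝ) : Set (ℝ × ℝ) :=
  {p | 0 < p.1 ∧ p.2 ^ 2 / 2 - Hfun γ ρin S₀ J p.1 = 0}

/-- The critical trajectory with acceleration. -/
def critTrajAcc (γ ρin S₀ J : ℝ) : Set (ℝ × ℝ) :=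
  {p ∈ critTraj γ ρin S₀ J | 0 ≤ (p.1 - usonic γ S₀ J) * p.2}

/-- The critical trajectory with deceleration. -/
def critTrajDec (γ ρin S₀ J : ℝ) : Set (ℝ × ℝ) :=
  {p ∈ critTraj γ ρin S₀ J | (p.1 - usonic γ S₀ J) * p.2 ≤ 0}

/-
The momentum equation reads `(u - a) u' = φ(u) E` with `φ` smooth and positive, and on the critical
trajectory `E² = (u - a)² M(u)` with `M` smooth, positive below the turning speed `c`, and with a
simple zero at `c`. The quotient `w = E / (u - a)` therefore obeys the regular planar system
`u' = φ(u) w`, `w' = φ(u) M'(u) / 2`, which has the first integral `w² - M(u)`. Substituting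
`u = c - S²` turns the level set `w² = M(u)` into a scalar autonomous equation for `S` with positive
right-hand side, which reaches `S = 0`, that is `u' = 0`, in finite time. Conversely, every smooth
solution of the singular system on the critical trajectory yields a solution of the planar one, even
if it crosses the sonic value, so uniqueness follows from the Lipschitz theory. The zeros at `a` and
`c` are divided out by Hadamard's lemma.
-/

open scoped Topology ContDiff

section Hadamard

variable {F : Type*} [NormedAddCommGroup F] [NormedSpace ℝ F] {s : Set ℝ} {a : ℝ}

lemma continuousOn_pow_smul_segment (hs : Convex ℝ s) (ha : a ∈ s) {f : ℝ → F}
    (hf : ContinuousOn f s) (k : ℕ) :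
    ContinuousOn (fun p : ℝ × ℝ => p.1 ^ k • f (a + p.1 * (p.2 - a))) (Icc 0 1 ×ˢ s) :=
  (by fun_prop : Continuous fun p : ℝ × ℝ => p.1 ^ k).continuousOn.smul
    (hf.comp (by fun_prop) fun _ hp => hs.add_smul_sub_mem ha hp.2 hp.1)

lemma hasDerivAt_integral_pow_smul_segment (hs : Convex ℝ s) (hso : IsOpen s) (ha : a ∈ s)
    {g : ℝ → F} (hg : ContDiffOn ℝ 1 g s) (n : ℕ) {x : ℝ} (hx : x ∈ s) :
    HasDerivAt (fun y => ∫ θ in (0 : ℝ)..1, θ ^ n • g (a + θ * (y - a)))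
      (∫ θ in (0 : ℝ)..1, θ ^ (n + 1) • deriv g (a + θ * (x - a))) x := by
  have hg' : ContinuousOn (deriv g) s := hg.continuousOn_deriv_of_isOpen hso le_rfl
  obtain ⟨ε, hε, hball⟩ := Metric.nhds_basis_closedBall.mem_iff.1 (hso.mem_nhds hx)
  have integrand_continuousOn {f : ℝ → F} (hf : ContinuousOn f s) (k : ℕ) {y : ℝ} (hy : y ∈ s) :
      ContinuousOn (fun θ : ℝ => θ ^ k • f (a + θ * (y - a))) (Icc 0 1) :=
    (continuousOn_pow_smul_segment hs ha hf k).comp (Continuous.prodMk_left y).continuousOn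
      fun _ hθ => ⟨hθ, hy⟩
  have integrand_measurable {f : ℝ → F} (hf : ContinuousOn f s) (k : ℕ) {y : ℝ} (hy : y ∈ s) :
      MeasureTheory.AEStronglyMeasurable (fun θ : ℝ => θ ^ k • f (a + θ * (y - a)))
        (MeasureTheory.volume.restrict (uIoc 0 1)) := by
    rw [uIoc_of_le zero_le_one]
    exact ((integrand_continuousOn hf k hy).mono Ioc_subset_Icc_self).aestronglyMeasurable
      measurableSet_Ioc
  obtain ⟨C, hC⟩ := (isCompact_Icc.prod (isCompact_closedBall x ε)).exists_bound_of_continuousOn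
    ((continuousOn_pow_smul_segment hs ha hg' (n + 1)).mono (prod_mono_right hball))
  refine (hasDerivAt_integral_of_dominated_loc_of_deriv_le (bound := fun _ => C)
    (F' := fun y θ => θ ^ (n + 1) • deriv g (a + θ * (y - a)))
    (Metric.closedBall_mem_nhds x hε) ?_ ?_ (integrand_measurable hg' _ hx) ?_
    intervalIntegrable_const ?_).2
  · filter_upwards [hso.mem_nhds hx] with y hy using integrand_measurable hg.continuousOn n hy
  · exact (integrand_continuousOn hg.continuousOn n hx).intervalIntegrable_of_Icc zero_le_one
  · refine Eventually.of_forall fun θ hθ y hy => hC (θ, y) ⟨?_, hy⟩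
    exact Ioc_subset_Icc_self (uIoc_of_le (zero_le_one (α := ℝ)) ▸ hθ)
  · refine Eventually.of_forall fun θ hθ y hy => ?_
    rw [uIoc_of_le zero_le_one] at hθ
    have hgy := ((hg.differentiableOn one_ne_zero).differentiableAt (hso.mem_nhds
      (hs.add_smul_sub_mem ha (hball hy) (Ioc_subset_Icc_self hθ)))).hasDerivAt
    have hseg : HasDerivAt (fun y => a + θ * (y - a)) θ y := by
      simpa using (((hasDerivAt_id y).sub_const a).const_mul θ).const_add a
    rw [pow_succ, mul_smul]
    exact (hgy.scomp y hseg).const_smul (θ ^ n)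

lemma contDiffOn_integral_pow_smul_segment (hs : Convex ℝ s) (hso : IsOpen s) (ha : a ∈ s)
    (m : ℕ) {g : ℝ → F} (hg : ContDiffOn ℝ (m + 1) g s) (n : ℕ) :
    ContDiffOn ℝ m (fun x => ∫ θ in (0 : ℝ)..1, θ ^ n • g (a + θ * (x - a))) s := by
  have hderiv (x : ℝ) (hx : x ∈ s) := hasDerivAt_integral_pow_smul_segment hs hso ha
    (hg.of_le le_add_self) n hx
  induction m generalizing g n with
  | zero =>
    exact contDiffOn_zero.2 fun x hx => (hderiv x hx).continuousAt.continuousWithinAt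
  | succ m ih =>
    have hg' : ContDiffOn ℝ (m + 1) (deriv g) s := hg.deriv_of_isOpen hso le_rfl
    rw [Nat.cast_succ, contDiffOn_succ_iff_deriv_of_isOpen hso]
    refine ⟨fun x hx => (hderiv x hx).differentiableAt.differentiableWithinAt, by simp, ?_⟩
    refine (ih hg' (n + 1) fun x hx => ?_).congr fun x hx => (hderiv x hx).deriv
    exact hasDerivAt_integral_pow_smul_segment hs hso ha (hg'.of_le le_add_self) (n + 1) hx

lemma dslope_eq_integral_deriv [CompleteSpace F] (hs : Convex ℝ s) (hso : IsOpen s) (ha : a ∈ s)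
    {f : ℝ → F} (hf : ContDiffOn ℝ 1 f s) {x : ℝ} (hx : x ∈ s) :
    dslope f a x = ∫ θ in (0 : ℝ)..1, deriv f (a + θ * (x - a)) := by
  rcases eq_or_ne x a with rfl | hxa
  · simp
  have hsub : uIcc a x ⊆ s := hs.ordConnected.uIcc_subset ha hx
  have hFTC : ∫ t in a..x, deriv f t = f x - f a :=
    integral_deriv_eq_sub
      (fun t ht => (hf.differentiableOn one_ne_zero).differentiableAt (hso.mem_nhds (hsub ht)))
      ((hf.continuousOn_deriv_of_isOpen hso le_rfl).mono hsub).intervalIntegrable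
  have hsubst := integral_comp_add_mul (a := 0) (b := 1) (deriv f) (sub_ne_zero.2 hxa) a
  simp only [mul_zero, add_zero, mul_one, add_sub_cancel, hFTC] at hsubst
  simpa only [dslope_of_ne _ hxa, slope_def_module, mul_comm] using hsubst.symm

lemma contDiffOn_dslope [CompleteSpace F] (hs : Convex ℝ s) (hso : IsOpen s) (ha : a ∈ s)
    {f : ℝ → F} (hf : ContDiffOn ℝ ∞ f s) : ContDiffOn ℝ ∞ (dslope f a) s := by
  have hf' : ContDiffOn ℝ ∞ (deriv f) s := ((contDiffOn_infty_iff_deriv_of_isOpen hso).1 hf).2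
  refine contDiffOn_infty.2 fun m => ?_
  refine (contDiffOn_integral_pow_smul_segment hs hso ha m
    (hf'.of_le (mod_cast le_top)) 0).congr fun x hx => ?_
  simpa only [pow_zero, one_smul] using
    dslope_eq_integral_deriv hs hso ha (hf.of_le (mod_cast le_top)) hx

end Hadamard

section AutonomousODE

lemma eqOn_Icc_of_hasDerivWithinAt {E : Type*} [NormedAddCommGroup E] [NormedSpace ℝ E]
    {V : E → E} {U : Set E} (hU : Convex ℝ U) (hV : ContDiffOn ℝ 1 V U) {t₀ t₁ : ℝ} {f g : ℝ → E}
    (hf : ∀ x ∈ Icc t₀ t₁, HasDerivWithinAt f (V (f x)) (Icc t₀ t₁) x)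
    (hfU : MapsTo f (Icc t₀ t₁) U)
    (hg : ∀ x ∈ Icc t₀ t₁, HasDerivWithinAt g (V (g x)) (Icc t₀ t₁) x)
    (hgU : MapsTo g (Icc t₀ t₁) U) (h₀ : f t₀ = g t₀) : EqOn f g (Icc t₀ t₁) := by
  have hf_cont : ContinuousOn f (Icc t₀ t₁) := HasDerivWithinAt.continuousOn hf
  have hg_cont : ContinuousOn g (Icc t₀ t₁) := HasDerivWithinAt.continuousOn hg
  obtain ⟨K, hK⟩ : ∃ K, LipschitzOnWith K V (f '' Icc t₀ t₁ ∪ g '' Icc t₀ t₁) :=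
    ((hV.locallyLipschitzOn hU).mono
      (union_subset hfU.image_subset hgU.image_subset)).exists_lipschitzOnWith_of_compact
      ((isCompact_Icc.image_of_continuousOn hf_cont).union
        (isCompact_Icc.image_of_continuousOn hg_cont))
  refine ODE_solution_unique_of_mem_Icc_right (fun _ _ => hK)
    hf_cont (fun x hx => ?_) (fun x hx => Or.inl ⟨x, Ico_subset_Icc_self hx, rfl⟩)
    hg_cont (fun x hx => ?_) (fun x hx => Or.inr ⟨x, Ico_subset_Icc_self hx, rfl⟩) h₀
  · exact (hf x (Ico_subset_Icc_self hx)).mono_of_mem_nhdsWithin (Icc_mem_nhdsGE_of_mem hx)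
  · exact (hg x (Ico_subset_Icc_self hx)).mono_of_mem_nhdsWithin (Icc_mem_nhdsGE_of_mem hx)

lemma exists_orderIso_hasDerivAt {q : ℝ → ℝ} (hq : Continuous q) (hpos : ∀ s, 0 < q s) {C : ℝ}
    (hC : ∀ s, q s ≤ C) (α : ℝ) :
    ∃ S : ℝ ≃o ℝ, S 0 = α ∧ ∀ x, HasDerivAt S (q (S x)) x := by
  have hq_inv : Continuous fun s => (q s)⁻¹ := hq.inv₀ fun s => (hpos s).ne'
  let time (s : ℝ) : ℝ := ∫ t in α..s, (q t)⁻¹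
  have time_deriv (s : ℝ) : HasDerivAt time (q s)⁻¹ s := hq_inv.integral_hasStrictDerivAt α s
    |>.hasDerivAt
  have time_strictMono : StrictMono time :=
    strictMono_of_hasDerivAt_pos time_deriv fun s => inv_pos.2 (hpos s)
  have time_sub_mono : Monotone fun s => time s - s * C⁻¹ := by
    refine monotone_of_hasDerivAt_nonneg
      (fun s => (time_deriv s).sub ((hasDerivAt_id s).mul_const C⁻¹)) fun s => ?_
    simpa using inv_anti₀ (hpos s) (hC s)
  have time_surjective : Function.Surjective time := by
    have hC_pos : 0 < C⁻¹ := inv_pos.2 ((hpos α).trans_le (hC α))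
    refine (continuous_iff_continuousAt.2 fun s => (time_deriv s).continuousAt).surjective ?_ ?_
    · refine tendsto_atTop_mono' _ ?_
        (tendsto_atTop_add_const_right _ (time 0) (tendsto_id.atTop_mul_const hC_pos))
      filter_upwards [eventually_ge_atTop 0] with s hs
      simpa [add_comm] using le_sub_iff_add_le.1 (time_sub_mono hs)
    · refine tendsto_atBot_mono' _ ?_
        (tendsto_atBot_add_const_right _ (time 0) (tendsto_id.atBot_mul_const hC_pos))
      filter_upwards [eventually_le_atBot 0] with s hs
      simpa [add_comm] using sub_le_iff_le_add.1 (time_sub_mono hs)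
  let S := (time_strictMono.orderIsoOfSurjective time time_surjective).symm
  have time_S (x : ℝ) : time (S x) = x :=
    (time_strictMono.orderIsoOfSurjective time time_surjective).apply_symm_apply x
  refine ⟨S, time_strictMono.injective ?_, fun x => ?_⟩
  · simp only [time_S, time, integral_same]
  · simpa using (time_deriv (S x)).of_local_left_inverse S.continuous.continuousAt
      (inv_ne_zero (hpos _).ne') (Eventually.of_forall time_S)

lemma exists_hasDerivAt_Icc_transit {q : ℝ → ℝ} {α β : ℝ} (hαβ : α < β)
    (hq : ContinuousOn q (Icc α β)) (hpos : ∀ s ∈ Icc α β, 0 < q s) :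
    ∃ l > 0, ∃ S : ℝ → ℝ, StrictMono S ∧ S 0 = α ∧ S l = β ∧
      ∀ x ∈ Icc 0 l, HasDerivAt S (q (S x)) x := by
  let r := IccExtend hαβ.le ((Icc α β).domRestrict q)
  have hr {s : ℝ} (hs : s ∈ Icc α β) : r s = q s := IccExtend_of_mem hαβ.le _ hs
  obtain ⟨C, hC⟩ := isCompact_Icc.bddAbove_image hq
  obtain ⟨S, hS₀, hS⟩ := exists_orderIso_hasDerivAt (q := r) hq.domRestrict.Icc_extend'
    (fun s => hpos _ (projIcc α β hαβ.le s).2)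
    (fun s => hC (mem_image_of_mem q (projIcc α β hαβ.le s).2)) α
  refine ⟨S.symm β, ?_, S, S.strictMono, hS₀, S.apply_symm_apply β, fun x hx => ?_⟩
  · rwa [gt_iff_lt, S.lt_symm_apply, hS₀]
  · rw [← hr ⟨hS₀ ▸ S.monotone hx.1, S.le_symm_apply.1 hx.2⟩]
    exact hS x

end AutonomousODE

section Transonic

/-- Coefficients of a system `P(u) u' = N(u) E`, `E' = G(u)` on `u > 0` which is singular exactly at
the sonic value `a`, with the equilibrium `u = b` in the supersonic region. Euler–Poisson is the
case `P(u) = u^(γ+1) - a^(γ+1)`, `N(u) = u^γ`, `G(u) = J/u - ρ`, `b = J/ρ`. -/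
structure IsTransonic (P N G : ℝ → ℝ) (a b : ℝ) : Prop where
  sonic_pos : 0 < a
  sonic_lt : a < b
  contDiffOn_P : ContDiffOn ℝ ∞ P (Ioi 0)
  contDiffOn_N : ContDiffOn ℝ ∞ N (Ioi 0)
  contDiffOn_G : ContDiffOn ℝ ∞ G (Ioi 0)
  P_sonic : P a = 0
  deriv_P_pos : ∀ t, 0 < t → 0 < deriv P t
  N_pos : ∀ t, 0 < t → 0 < N t
  G_pos : ∀ t, 0 < t → t < b → 0 < G t
  G_neg : ∀ t, b < t → G t < 0

/-- The function `H` for which `E²/2 - H(u)` is conserved along `P(u) u' = N(u) E`, `E' = G(u)`. -/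
noncomputable def potential (P N G : ℝ → ℝ) (a u : ℝ) : ℝ :=
  ∫ t in a..u, P t * G t / N t

/-- The factor `φ` that puts the momentum equation `P(u) u' = N(u) E` in the form
`(u - a) u' = φ(u) E`; it is regular at the sonic value `a`. -/
noncomputable def speedFactor (P N : ℝ → ℝ) (a t : ℝ) : ℝ :=
  N t / dslope P a t

/-- The function `M` with `H(t) = (t - a)² M(t) / 2`, where `H` is the potential; it is regular at
the sonic value `a`. -/
noncomputable def reducedPotential (P N G : ℝ → ℝ) (a t : ℝ) : ℝ :=
  2 * dslope (dslope (potential P N G a) a) a t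

variable {P N G : ℝ → ℝ} {a b c : ℝ}

namespace IsTransonic

lemma strictMonoOn_P (h : IsTransonic P N G a b) : StrictMonoOn P (Ioi 0) :=
  strictMonoOn_of_deriv_pos (convex_Ioi 0) h.contDiffOn_P.continuousOn
    fun t ht => h.deriv_P_pos t (interior_subset ht)

lemma dslope_P_pos (h : IsTransonic P N G a b) {t : ℝ} (ht : 0 < t) : 0 < dslope P a t := by
  rcases eq_or_ne t a with rfl | hta
  · simpa only [dslope_same] using h.deriv_P_pos t ht
  · rw [dslope_of_ne _ hta]
    exact h.strictMonoOn_P.slope_pos h.sonic_pos ht hta.symm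

lemma contDiffOn_dslope_P (h : IsTransonic P N G a b) : ContDiffOn ℝ ∞ (dslope P a) (Ioi 0) :=
  contDiffOn_dslope (convex_Ioi 0) isOpen_Ioi h.sonic_pos h.contDiffOn_P

lemma sub_mul_dslope_P (h : IsTransonic P N G a b) (t : ℝ) : (t - a) * dslope P a t = P t :=
  sub_smul_dslope_of_zero h.P_sonic t

lemma speedFactor_pos (h : IsTransonic P N G a b) {t : ℝ} (ht : 0 < t) : 0 < speedFactor P N a t :=
  div_pos (h.N_pos t ht) (h.dslope_P_pos ht)

lemma contDiffOn_speedFactor (h : IsTransonic P N G a b) :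
    ContDiffOn ℝ ∞ (speedFactor P N a) (Ioi 0) :=
  h.contDiffOn_N.div h.contDiffOn_dslope_P fun _ ht => (h.dslope_P_pos ht).ne'

lemma P_mul_eq_mul_N_iff (h : IsTransonic P N G a b) {t : ℝ} (ht : 0 < t) {y z : ℝ} :
    P t * y = z * N t ↔ (t - a) * y = speedFactor P N a t * z := by
  rw [← h.sub_mul_dslope_P, speedFactor, div_mul_eq_mul_div, eq_div_iff (h.dslope_P_pos ht).ne',
    mul_comm z, mul_right_comm]

lemma contDiffOn_P_mul_G_div_N (h : IsTransonic P N G a b) :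
    ContDiffOn ℝ ∞ (fun t => P t * G t / N t) (Ioi 0) :=
  (h.contDiffOn_P.mul h.contDiffOn_G).div h.contDiffOn_N fun t ht => (h.N_pos t ht).ne'

lemma hasDerivAt_potential (h : IsTransonic P N G a b) {t : ℝ} (ht : 0 < t) :
    HasDerivAt (potential P N G a) (P t * G t / N t) t := by
  have hcont := h.contDiffOn_P_mul_G_div_N.continuousOn
  exact integral_hasDerivAt_right
    (hcont.mono (ordConnected_Ioi.uIcc_subset h.sonic_pos ht)).intervalIntegrable
    (hcont.stronglyMeasurableAtFilter isOpen_Ioi t ht) (hcont.continuousAt (Ioi_mem_nhds ht))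

lemma contDiffOn_potential (h : IsTransonic P N G a b) :
    ContDiffOn ℝ ∞ (potential P N G a) (Ioi 0) :=
  (contDiffOn_infty_iff_deriv_of_isOpen isOpen_Ioi).2
    ⟨fun _ ht => (h.hasDerivAt_potential ht).differentiableAt.differentiableWithinAt,
      h.contDiffOn_P_mul_G_div_N.congr fun _ ht => (h.hasDerivAt_potential ht).deriv⟩

lemma contDiffOn_reducedPotential (h : IsTransonic P N G a b) :
    ContDiffOn ℝ ∞ (reducedPotential P N G a) (Ioi 0) :=
  contDiffOn_const.mul <| contDiffOn_dslope (convex_Ioi 0) isOpen_Ioi h.sonic_pos <|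
    contDiffOn_dslope (convex_Ioi 0) isOpen_Ioi h.sonic_pos h.contDiffOn_potential

lemma hasDerivAt_reducedPotential (h : IsTransonic P N G a b) {t : ℝ} (ht : 0 < t) :
    HasDerivAt (reducedPotential P N G a) (deriv (reducedPotential P N G a) t) t :=
  ((h.contDiffOn_reducedPotential.differentiableOn (by simp)).differentiableAt
    (Ioi_mem_nhds ht)).hasDerivAt

lemma contDiffOn_deriv_reducedPotential (h : IsTransonic P N G a b) :
    ContDiffOn ℝ ∞ (deriv (reducedPotential P N G a)) (Ioi 0) :=
  ((contDiffOn_infty_iff_deriv_of_isOpen isOpen_Ioi).1 h.contDiffOn_reducedPotential).2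

lemma potential_eq (h : IsTransonic P N G a b) (t : ℝ) :
    potential P N G a t = (t - a) ^ 2 * reducedPotential P N G a t / 2 := by
  have hH : potential P N G a a = 0 := integral_same
  have hH' : dslope (potential P N G a) a a = 0 := by
    rw [dslope_same, (h.hasDerivAt_potential h.sonic_pos).deriv, h.P_sonic, zero_mul, zero_div]
  have h₁ := sub_smul_dslope_of_zero hH t
  have h₂ := sub_smul_dslope_of_zero hH' t
  rw [smul_eq_mul] at h₁ h₂
  rw [reducedPotential, ← h₁, ← h₂]
  ring

lemma hasDerivAt_potential_factored (h : IsTransonic P N G a b) {t : ℝ} (ht : 0 < t) :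
    HasDerivAt (potential P N G a) ((t - a) * (reducedPotential P N G a t
      + (t - a) * (deriv (reducedPotential P N G a) t / 2))) t := by
  rw [funext h.potential_eq]
  refine (((((hasDerivAt_id' t).sub_const a).pow 2).mul
    (h.hasDerivAt_reducedPotential ht)).div_const 2).congr_deriv ?_
  simp only [Pi.pow_apply, Nat.cast_ofNat]
  ring

lemma speedFactor_mul_eq_G (h : IsTransonic P N G a b) {t : ℝ} (ht : 0 < t) :
    speedFactor P N a t *
      (reducedPotential P N G a t + (t - a) * (deriv (reducedPotential P N G a) t / 2)) = G t := by
  have hM := h.contDiffOn_reducedPotential.continuousOn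
  have hM' := h.contDiffOn_deriv_reducedPotential.continuousOn
  have hφ := h.contDiffOn_speedFactor.continuousOn
  have hcont : ContinuousOn (fun t => speedFactor P N a t * (reducedPotential P N G a t
      + (t - a) * (deriv (reducedPotential P N G a) t / 2))) (Ioi 0) := by fun_prop
  -- Off `a` this compares two expressions for the derivative of the potential divided by `t - a`.
  refine EqOn.of_subset_closure (s := Ioi 0 ∩ {a}ᶜ) (fun t ht => ?_) hcont
    h.contDiffOn_G.continuousOn inter_subset_left
    ((dense_compl_singleton a).open_subset_closure_inter isOpen_Ioi) ht
  obtain ⟨ht : 0 < t, hta⟩ := ht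
  have hderiv := (h.hasDerivAt_potential ht).unique (h.hasDerivAt_potential_factored ht)
  rw [div_eq_iff (h.N_pos t ht).ne', h.P_mul_eq_mul_N_iff ht] at hderiv
  refine mul_left_cancel₀ (sub_ne_zero.2 hta) ?_
  linear_combination -hderiv

lemma reducedPotential_sonic_pos (h : IsTransonic P N G a b) : 0 < reducedPotential P N G a a := by
  have hG : speedFactor P N a a * reducedPotential P N G a a = G a := by
    simpa using h.speedFactor_mul_eq_G h.sonic_pos
  exact pos_of_mul_pos_right (hG ▸ h.G_pos a h.sonic_pos h.sonic_lt)
    (h.speedFactor_pos h.sonic_pos).le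

lemma P_neg (h : IsTransonic P N G a b) {t : ℝ} (ht : 0 < t) (hta : t < a) : P t < 0 :=
  h.P_sonic ▸ h.strictMonoOn_P ht h.sonic_pos hta

lemma P_pos (h : IsTransonic P N G a b) {t : ℝ} (hta : a < t) : 0 < P t :=
  h.P_sonic ▸ h.strictMonoOn_P h.sonic_pos (h.sonic_pos.trans hta) hta

lemma strictAntiOn_potential_subsonic (h : IsTransonic P N G a b) :
    StrictAntiOn (potential P N G a) (Ioc 0 a) := by
  refine strictAntiOn_of_deriv_neg (convex_Ioc 0 a)
    (h.contDiffOn_potential.continuousOn.mono Ioc_subset_Ioi_self) fun t ht => ?_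
  rw [interior_Ioc] at ht
  rw [(h.hasDerivAt_potential ht.1).deriv]
  exact div_neg_of_neg_of_pos (mul_neg_of_neg_of_pos (h.P_neg ht.1 ht.2)
    (h.G_pos t ht.1 (ht.2.trans h.sonic_lt))) (h.N_pos t ht.1)

lemma strictMonoOn_potential (h : IsTransonic P N G a b) :
    StrictMonoOn (potential P N G a) (Icc a b) := by
  refine strictMonoOn_of_deriv_pos (convex_Icc a b)
    (h.contDiffOn_potential.continuousOn.mono fun t ht => h.sonic_pos.trans_le ht.1) fun t ht => ?_
  rw [interior_Icc] at ht
  have ht₀ : 0 < t := h.sonic_pos.trans ht.1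
  rw [(h.hasDerivAt_potential ht₀).deriv]
  exact div_pos (mul_pos (h.P_pos ht.1) (h.G_pos t ht₀ ht.2)) (h.N_pos t ht₀)

lemma strictAntiOn_potential_supersonic (h : IsTransonic P N G a b) :
    StrictAntiOn (potential P N G a) (Ici b) := by
  have hb : 0 < b := h.sonic_pos.trans h.sonic_lt
  refine strictAntiOn_of_deriv_neg (convex_Ici b)
    (h.contDiffOn_potential.continuousOn.mono fun t ht => hb.trans_le ht) fun t ht => ?_
  rw [interior_Ici] at ht
  have ht₀ : 0 < t := hb.trans ht
  rw [(h.hasDerivAt_potential ht₀).deriv]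
  exact div_neg_of_neg_of_pos (mul_neg_of_pos_of_neg (h.P_pos (h.sonic_lt.trans ht))
    (h.G_neg t ht)) (h.N_pos t ht₀)

lemma exists_potential_eq_zero (h : IsTransonic P N G a b) {δ t₀ : ℝ} (hδ : 0 < δ) (hbt₀ : b ≤ t₀)
    (hle : ∀ t, t₀ < t → P t * G t / N t ≤ -δ) : ∃ c > b, potential P N G a c = 0 := by
  have hpos : Ici b ⊆ Ioi 0 := fun t ht => (h.sonic_pos.trans h.sonic_lt).trans_le ht
  have hcont : ContinuousOn (potential P N G a) (Ici b) :=
    h.contDiffOn_potential.continuousOn.mono hpos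
  have hb : 0 < potential P N G a b :=
    (integral_same (μ := MeasureTheory.volume)).symm.trans_lt
      (h.strictMonoOn_potential ⟨le_rfl, h.sonic_lt.le⟩ ⟨h.sonic_lt.le, le_rfl⟩ h.sonic_lt)
  let t₁ := t₀ + |potential P N G a t₀| / δ
  have ht₀₁ : t₀ ≤ t₁ := le_add_of_nonneg_right (by positivity)
  have ht₁ : potential P N G a t₁ ≤ 0 := by
    have hdecay := (convex_Ici t₀).image_sub_le_mul_sub_of_deriv_le (C := -δ)
      (hcont.mono (Ici_subset_Ici.2 hbt₀))
      (fun t ht => ?_) (fun t ht => ?_) t₀ self_mem_Ici t₁ ht₀₁ ht₀₁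
    · have : δ * (t₁ - t₀) = |potential P N G a t₀| := by
        rw [add_sub_cancel_left, mul_div_cancel₀ _ hδ.ne']
      linarith [le_abs_self (potential P N G a t₀)]
    all_goals rw [interior_Ici] at ht
    all_goals have hH := h.hasDerivAt_potential (hpos (hbt₀.trans ht.le))
    · exact hH.differentiableAt.differentiableWithinAt
    · exact hH.deriv ▸ hle t ht
  obtain ⟨c, hc, hHc⟩ := intermediate_value_Icc' (hbt₀.trans ht₀₁)
    (hcont.mono Icc_subset_Ici_self) ⟨ht₁, hb.le⟩
  exact ⟨c, hc.1.lt_of_ne fun hbc => (hbc ▸ hb).ne' hHc, hHc⟩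

lemma potential_pos_of_lt_sonic (h : IsTransonic P N G a b) {t : ℝ} (ht : 0 < t) (hta : t < a) :
    0 < potential P N G a t := by
  have hH : potential P N G a a = 0 := integral_same
  exact hH ▸ h.strictAntiOn_potential_subsonic ⟨ht, hta.le⟩ ⟨h.sonic_pos, le_rfl⟩ hta

lemma potential_pos (h : IsTransonic P N G a b) (hbc : b < c) (hc : potential P N G a c = 0)
    {t : ℝ} (ht : t ∈ Ioo 0 c) (hta : t ≠ a) : 0 < potential P N G a t := by
  have hH : potential P N G a a = 0 := integral_same
  rcases hta.lt_or_gt with hta | hat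
  · exact h.potential_pos_of_lt_sonic ht.1 hta
  rcases le_or_gt t b with htb | hbt
  · exact hH ▸ h.strictMonoOn_potential ⟨le_rfl, h.sonic_lt.le⟩ ⟨hat.le, htb⟩ hat
  · exact hc ▸ h.strictAntiOn_potential_supersonic hbt.le hbc.le ht.2

lemma reducedPotential_pos (h : IsTransonic P N G a b) (hbc : b < c)
    (hc : potential P N G a c = 0) {t : ℝ} (ht : t ∈ Ioo 0 c) : 0 < reducedPotential P N G a t := by
  rcases eq_or_ne t a with rfl | hta
  · exact h.reducedPotential_sonic_pos
  · have hH := h.potential_pos hbc hc ht hta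
    rw [h.potential_eq, mul_div_assoc] at hH
    linarith [pos_of_mul_pos_right hH (sq_nonneg (t - a))]

lemma reducedPotential_eq_zero (h : IsTransonic P N G a b) (hbc : b < c)
    (hc : potential P N G a c = 0) : reducedPotential P N G a c = 0 := by
  rw [h.potential_eq] at hc
  have hca : c - a ≠ 0 := sub_ne_zero.2 (h.sonic_lt.trans hbc).ne'
  simpa [hca] using hc

lemma deriv_reducedPotential_neg (h : IsTransonic P N G a b) (hbc : b < c)
    (hc : potential P N G a c = 0) : deriv (reducedPotential P N G a) c < 0 := by
  have hc₀ : 0 < c := h.sonic_pos.trans (h.sonic_lt.trans hbc)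
  have hG := h.speedFactor_mul_eq_G hc₀
  rw [h.reducedPotential_eq_zero hbc hc, zero_add] at hG
  have hφ := h.speedFactor_pos hc₀
  have hca : 0 < c - a := sub_pos.2 (h.sonic_lt.trans hbc)
  have := neg_of_mul_neg_right (neg_of_mul_neg_right (hG ▸ h.G_neg c hbc) hφ.le) hca.le
  linarith

end IsTransonic

/-- `(u, E)` is a smooth positive solution of `P(u) u' = N(u) E`, `E' = G(u)` on `[0, l]`, with
one-sided derivatives at the endpoints. -/
structure IsSolution (P N G : ℝ → ℝ) (l : ℝ) (u E : ℝ → ℝ) : Prop where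
  smooth_u : ContDiffOn ℝ ∞ u (Icc 0 l)
  smooth_E : ContDiffOn ℝ ∞ E (Icc 0 l)
  pos : ∀ x ∈ Icc 0 l, 0 < u x
  ode : ∀ x ∈ Icc 0 l, P (u x) * derivWithin u (Icc 0 l) x = E x * N (u x) ∧
    derivWithin E (Icc 0 l) x = G (u x)

/-- `(u, w)` solves on `[0, l]` the regular system `u' = φ(u) w`, `w' = φ(u) M'(u) / 2` on the level
set `w² = M(u)` of its first integral. With `E = (u - a) w` this is the desingularization of the
system of `IsSolution` along its critical trajectory. -/
structure IsReducedSolution (P N G : ℝ → ℝ) (a l : ℝ) (u w : ℝ → ℝ) : Prop where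
  pos : ∀ x ∈ Icc 0 l, 0 < u x
  hasDeriv_u : ∀ x ∈ Icc 0 l, HasDerivWithinAt u (speedFactor P N a (u x) * w x) (Icc 0 l) x
  hasDeriv_w : ∀ x ∈ Icc 0 l, HasDerivWithinAt w
    (speedFactor P N a (u x) * (deriv (reducedPotential P N G a) (u x) / 2)) (Icc 0 l) x
  energy : ∀ x ∈ Icc 0 l, w x ^ 2 = reducedPotential P N G a (u x)

/-- The vector field of the system of `IsReducedSolution`. -/
noncomputable def reducedVectorField (P N G : ℝ → ℝ) (a : ℝ) (p : ℝ × ℝ) : ℝ × ℝ :=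
  (speedFactor P N a p.1 * p.2,
    speedFactor P N a p.1 * (deriv (reducedPotential P N G a) p.1 / 2))

lemma IsTransonic.contDiffOn_reducedVectorField (h : IsTransonic P N G a b) :
    ContDiffOn ℝ ∞ (reducedVectorField P N G a) (Ioi 0 ×ˢ univ) := by
  have hfst : MapsTo Prod.fst (Ioi (0 : ℝ) ×ˢ (univ : Set ℝ)) (Ioi 0) := fun _ hp => hp.1
  have hφ := h.contDiffOn_speedFactor.comp contDiffOn_fst hfst
  have hM' := h.contDiffOn_deriv_reducedPotential.comp contDiffOn_fst hfst
  exact (hφ.mul contDiffOn_snd).prodMk (hφ.mul (hM'.div_const 2))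

variable {l : ℝ} {u w E : ℝ → ℝ}

namespace IsReducedSolution

lemma mono (hr : IsReducedSolution P N G a l u w) {l' : ℝ} (hl : l' ≤ l) :
    IsReducedSolution P N G a l' u w where
  pos x hx := hr.pos x (Icc_subset_Icc_right hl hx)
  hasDeriv_u x hx := (hr.hasDeriv_u x (Icc_subset_Icc_right hl hx)).mono (Icc_subset_Icc_right hl)
  hasDeriv_w x hx := (hr.hasDeriv_w x (Icc_subset_Icc_right hl hx)).mono (Icc_subset_Icc_right hl)
  energy x hx := hr.energy x (Icc_subset_Icc_right hl hx)

lemma hasDerivWithinAt_prodMk (hr : IsReducedSolution P N G a l u w) {x : ℝ} (hx : x ∈ Icc 0 l) :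
    HasDerivWithinAt (fun x => (u x, w x)) (reducedVectorField P N G a (u x, w x)) (Icc 0 l) x :=
  (hr.hasDeriv_u x hx).prodMk (hr.hasDeriv_w x hx)

lemma mapsTo_prodMk (hr : IsReducedSolution P N G a l u w) :
    MapsTo (fun x => (u x, w x)) (Icc 0 l) (Ioi 0 ×ˢ univ) :=
  fun x hx => ⟨hr.pos x hx, mem_univ _⟩

lemma contDiffOn_prodMk (hr : IsReducedSolution P N G a l u w) (h : IsTransonic P N G a b) :
    ContDiffOn ℝ ∞ (fun x => (u x, w x)) (Icc 0 l) :=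
  ODE.contDiffOn_enat_Icc_of_hasDerivWithinAt (f := fun _ => reducedVectorField P N G a)
    (h.contDiffOn_reducedVectorField.comp contDiffOn_snd fun _ hp => hp.2)
    (fun _ hx => hr.hasDerivWithinAt_prodMk hx) hr.mapsTo_prodMk

lemma eqOn {u₁ w₁ u₂ w₂ : ℝ → ℝ} (h : IsTransonic P N G a b)
    (hr₁ : IsReducedSolution P N G a l u₁ w₁) (hr₂ : IsReducedSolution P N G a l u₂ w₂)
    (hu : u₁ 0 = u₂ 0) (hw : w₁ 0 = w₂ 0) :
    EqOn (fun x => (u₁ x, w₁ x)) (fun x => (u₂ x, w₂ x)) (Icc 0 l) :=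
  eqOn_Icc_of_hasDerivWithinAt ((convex_Ioi 0).prod convex_univ)
    (h.contDiffOn_reducedVectorField.of_le (mod_cast le_top))
    (fun _ hx => hr₁.hasDerivWithinAt_prodMk hx) hr₁.mapsTo_prodMk
    (fun _ hx => hr₂.hasDerivWithinAt_prodMk hx) hr₂.mapsTo_prodMk (by simp only [hu, hw])

lemma isSolution (hr : IsReducedSolution P N G a l u w) (h : IsTransonic P N G a b) (hl : 0 < l) :
    IsSolution P N G l u fun x => (u x - a) * w x where
  smooth_u := (hr.contDiffOn_prodMk h).fst
  smooth_E := ((hr.contDiffOn_prodMk h).fst.sub contDiffOn_const).mul (hr.contDiffOn_prodMk h).snd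
  pos := hr.pos
  ode x hx := by
    have hunique := uniqueDiffOn_Icc hl x hx
    have hu := hr.hasDeriv_u x hx
    have hE := (hu.sub_const a).mul (hr.hasDeriv_w x hx)
    constructor
    · rw [hu.derivWithin hunique, h.P_mul_eq_mul_N_iff (hr.pos x hx)]
      ring
    · refine (hE.derivWithin hunique).trans ?_
      rw [← h.speedFactor_mul_eq_G (hr.pos x hx), ← hr.energy x hx]
      ring

end IsReducedSolution

/-- The field `w` of the reduced system carried by a solution `u`, read off from `u' = φ(u) w`. -/
noncomputable def reducedField (P N : ℝ → ℝ) (a l : ℝ) (u : ℝ → ℝ) (x : ℝ) : ℝ :=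
  derivWithin u (Icc 0 l) x / speedFactor P N a (u x)

namespace IsSolution

lemma hasDerivWithinAt_u (hs : IsSolution P N G l u E) {x : ℝ} (hx : x ∈ Icc 0 l) :
    HasDerivWithinAt u (derivWithin u (Icc 0 l) x) (Icc 0 l) x :=
  (hs.smooth_u.differentiableOn (by simp) x hx).hasDerivWithinAt

lemma hasDerivWithinAt_E (hs : IsSolution P N G l u E) {x : ℝ} (hx : x ∈ Icc 0 l) :
    HasDerivWithinAt E (G (u x)) (Icc 0 l) x :=
  (hs.ode x hx).2 ▸ (hs.smooth_E.differentiableOn (by simp) x hx).hasDerivWithinAt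

lemma sq_div_two_eq_potential (hs : IsSolution P N G l u E) (h : IsTransonic P N G a b)
    (hl : 0 < l) (h₀ : E 0 ^ 2 / 2 = potential P N G a (u 0)) {x : ℝ} (hx : x ∈ Icc 0 l) :
    E x ^ 2 / 2 = potential P N G a (u x) := by
  have hderiv (y : ℝ) (hy : y ∈ Icc 0 l) :
      HasDerivWithinAt (fun x => E x ^ 2 / 2 - potential P N G a (u x)) 0 (Icc 0 l) y := by
    have hu := hs.pos y hy
    refine ((((hs.hasDerivWithinAt_E hy).pow 2).div_const 2).sub
      ((h.hasDerivAt_potential hu).comp_hasDerivWithinAt y (hs.hasDerivWithinAt_u hy))).congr_deriv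
      ?_
    have hN := (h.N_pos _ hu).ne'
    field_simp
    linear_combination -2 * G (u y) * (hs.ode y hy).1
  have hconst := constant_of_derivWithin_zero
    (fun y hy => (hderiv y hy).differentiableWithinAt)
    (fun y hy => (hderiv y (Ico_subset_Icc_self hy)).derivWithin
      (uniqueDiffOn_Icc hl y (Ico_subset_Icc_self hy))) x hx
  linarith

lemma derivWithin_u (hs : IsSolution P N G l u E) (h : IsTransonic P N G a b) {x : ℝ}
    (hx : x ∈ Icc 0 l) :
    derivWithin u (Icc 0 l) x = speedFactor P N a (u x) * reducedField P N a l u x :=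
  (mul_div_cancel₀ _ (h.speedFactor_pos (hs.pos x hx)).ne').symm

lemma sub_mul_reducedField (hs : IsSolution P N G l u E) (h : IsTransonic P N G a b) {x : ℝ}
    (hx : x ∈ Icc 0 l) : (u x - a) * reducedField P N a l u x = E x := by
  have hmomentum := (h.P_mul_eq_mul_N_iff (hs.pos x hx)).1 (hs.ode x hx).1
  rw [hs.derivWithin_u h hx] at hmomentum
  refine mul_left_cancel₀ (h.speedFactor_pos (hs.pos x hx)).ne' ?_
  linear_combination hmomentum

lemma differentiableOn_reducedField (hs : IsSolution P N G l u E) (h : IsTransonic P N G a b)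
    (hl : 0 < l) : DifferentiableOn ℝ (reducedField P N a l u) (Icc 0 l) := by
  have hu' : ContDiffOn ℝ ∞ (derivWithin u (Icc 0 l)) (Icc 0 l) :=
    hs.smooth_u.derivWithin (uniqueDiffOn_Icc hl) le_rfl
  exact (hu'.div (h.contDiffOn_speedFactor.comp hs.smooth_u hs.pos)
    fun x hx => (h.speedFactor_pos (hs.pos x hx)).ne').differentiableOn (by simp)

/-- The derivative of `(u - a) w = E`. -/
lemma speedFactor_mul_sq_add (hs : IsSolution P N G l u E) (h : IsTransonic P N G a b)
    (hl : 0 < l) {x : ℝ} (hx : x ∈ Icc 0 l) :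
    speedFactor P N a (u x) * reducedField P N a l u x ^ 2
      + (u x - a) * derivWithin (reducedField P N a l u) (Icc 0 l) x = G (u x) := by
  have hw := (hs.differentiableOn_reducedField h hl x hx).hasDerivWithinAt
  have hE := ((hs.hasDerivWithinAt_u hx).sub_const a).mul hw
  have hderiv := (uniqueDiffOn_Icc hl x hx).eq_deriv _
    (hE.congr_of_mem (fun y hy => (hs.sub_mul_reducedField h hy).symm) hx)
    (hs.hasDerivWithinAt_E hx)
  rw [hs.derivWithin_u h hx] at hderiv
  linear_combination hderiv

lemma reducedField_sq (hs : IsSolution P N G l u E) (h : IsTransonic P N G a b) (hl : 0 < l)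
    (h₀ : E 0 ^ 2 / 2 = potential P N G a (u 0)) {x : ℝ} (hx : x ∈ Icc 0 l) :
    reducedField P N a l u x ^ 2 = reducedPotential P N G a (u x) := by
  rcases eq_or_ne (u x) a with hua | hua
  · have hG := hs.speedFactor_mul_sq_add h hl hx
    rw [← h.speedFactor_mul_eq_G (hs.pos x hx)] at hG
    refine mul_left_cancel₀ (h.speedFactor_pos (hs.pos x hx)).ne' ?_
    simpa [hua] using hG
  · have henergy := hs.sq_div_two_eq_potential h hl h₀ hx
    rw [h.potential_eq, ← hs.sub_mul_reducedField h hx] at henergy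
    refine mul_left_cancel₀ (pow_ne_zero 2 (sub_ne_zero.2 hua)) ?_
    linear_combination 2 * henergy

lemma derivWithin_reducedField (hs : IsSolution P N G l u E) (h : IsTransonic P N G a b)
    (hl : 0 < l) (h₀ : E 0 ^ 2 / 2 = potential P N G a (u 0)) {x : ℝ} (hx : x ∈ Icc 0 l) :
    derivWithin (reducedField P N a l u) (Icc 0 l) x
      = speedFactor P N a (u x) * (deriv (reducedPotential P N G a) (u x) / 2) := by
  have hsq := hs.reducedField_sq h hl h₀ hx
  rcases eq_or_ne (u x) a with hua | hua
  · have hw := (hs.differentiableOn_reducedField h hl x hx).hasDerivWithinAt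
    have hM := (h.hasDerivAt_reducedPotential (hs.pos x hx)).comp_hasDerivWithinAt x
      (hs.hasDerivWithinAt_u hx)
    have hderiv := (uniqueDiffOn_Icc hl x hx).eq_deriv _ (hw.pow 2)
      (hM.congr_of_mem (fun y hy => hs.reducedField_sq h hl h₀ hy) hx)
    have hw₀ : reducedField P N a l u x ≠ 0 := by
      refine pow_ne_zero_iff two_ne_zero |>.1 ?_
      rw [hsq, hua]
      exact h.reducedPotential_sonic_pos.ne'
    rw [hs.derivWithin_u h hx] at hderiv
    refine mul_left_cancel₀ hw₀ ?_
    simp only [Nat.cast_ofNat] at hderiv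
    linear_combination hderiv / 2
  · have hG := hs.speedFactor_mul_sq_add h hl hx
    rw [← h.speedFactor_mul_eq_G (hs.pos x hx), hsq] at hG
    refine mul_left_cancel₀ (sub_ne_zero.2 hua) ?_
    linear_combination hG

lemma isReducedSolution (hs : IsSolution P N G l u E) (h : IsTransonic P N G a b)
    (hl : 0 < l) (h₀ : E 0 ^ 2 / 2 = potential P N G a (u 0)) :
    IsReducedSolution P N G a l u (reducedField P N a l u) where
  pos := hs.pos
  hasDeriv_u _ hx := hs.derivWithin_u h hx ▸ hs.hasDerivWithinAt_u hx
  hasDeriv_w _ hx := hs.derivWithin_reducedField h hl h₀ hx ▸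
    (hs.differentiableOn_reducedField h hl _ hx).hasDerivWithinAt
  energy _ hx := hs.reducedField_sq h hl h₀ hx

end IsSolution

/-- The factor `h` in `M(t) = (c - t) h(t)`, where `M` is the reduced potential and `c` its
supersonic zero, at which the accelerating solutions turn. -/
noncomputable def turningFactor (P N G : ℝ → ℝ) (a c t : ℝ) : ℝ :=
  -dslope (reducedPotential P N G a) c t

namespace IsTransonic

lemma reducedPotential_eq_sub_mul (h : IsTransonic P N G a b) (hbc : b < c)
    (hc : potential P N G a c = 0) (t : ℝ) :
    reducedPotential P N G a t = (c - t) * turningFactor P N G a c t := by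
  rw [← sub_smul_dslope_of_zero (h.reducedPotential_eq_zero hbc hc) t, turningFactor, smul_eq_mul]
  ring

lemma turningFactor_pos (h : IsTransonic P N G a b) (hbc : b < c) (hc : potential P N G a c = 0)
    {t : ℝ} (ht : t ∈ Ioc 0 c) : 0 < turningFactor P N G a c t := by
  rcases ht.2.eq_or_lt with rfl | htc
  · rw [turningFactor, dslope_same]
    exact neg_pos.2 (h.deriv_reducedPotential_neg hbc hc)
  · have hM := h.reducedPotential_pos hbc hc ⟨ht.1, htc⟩
    rw [h.reducedPotential_eq_sub_mul hbc hc] at hM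
    exact pos_of_mul_pos_right hM (sub_pos.2 htc).le

lemma contDiffOn_turningFactor (h : IsTransonic P N G a b) (hc : 0 < c) :
    ContDiffOn ℝ ∞ (turningFactor P N G a c) (Ioi 0) :=
  (contDiffOn_dslope (convex_Ioi 0) isOpen_Ioi hc h.contDiffOn_reducedPotential).neg

lemma hasDerivAt_turningFactor (h : IsTransonic P N G a b) (hc : 0 < c) {t : ℝ} (ht : 0 < t) :
    HasDerivAt (turningFactor P N G a c) (deriv (turningFactor P N G a c) t) t :=
  (((h.contDiffOn_turningFactor hc).differentiableOn (by simp)).differentiableAt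
    (Ioi_mem_nhds ht)).hasDerivAt

lemma deriv_reducedPotential_eq (h : IsTransonic P N G a b) (hbc : b < c)
    (hc : potential P N G a c = 0) {t : ℝ} (ht : 0 < t) :
    deriv (reducedPotential P N G a) t
      = (c - t) * deriv (turningFactor P N G a c) t - turningFactor P N G a c t := by
  have hc₀ : 0 < c := h.sonic_pos.trans (h.sonic_lt.trans hbc)
  rw [funext (h.reducedPotential_eq_sub_mul hbc hc)]
  refine ((((hasDerivAt_id' t).const_sub c).mul
    (h.hasDerivAt_turningFactor hc₀ ht)).congr_deriv ?_).deriv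
  ring

/-- Substituting `u = c - S²` removes the square-root singularity at the turning point `c`: the
sign of `w = -S √h(u)` is that of `-S`, and `S` satisfies a scalar autonomous equation. -/
lemma isReducedSolution_of_sub_sq (h : IsTransonic P N G a b) (hbc : b < c)
    (hc : potential P N G a c = 0) {l : ℝ} {S : ℝ → ℝ}
    (hpos : ∀ x ∈ Icc 0 l, 0 < c - S x ^ 2)
    (hS : ∀ x ∈ Icc 0 l, HasDerivAt S
      (√(turningFactor P N G a c (c - S x ^ 2)) * speedFactor P N a (c - S x ^ 2) / 2) x) :
    IsReducedSolution P N G a l (fun x => c - S x ^ 2)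
      fun x => -S x * √(turningFactor P N G a c (c - S x ^ 2)) := by
  have hc₀ : 0 < c := h.sonic_pos.trans (h.sonic_lt.trans hbc)
  have hroot_pos (x : ℝ) (hx : x ∈ Icc 0 l) : 0 < turningFactor P N G a c (c - S x ^ 2) :=
    h.turningFactor_pos hbc hc ⟨hpos x hx, sub_le_self c (sq_nonneg _)⟩
  have hu (x : ℝ) (hx : x ∈ Icc 0 l) : HasDerivAt (fun x => c - S x ^ 2)
      (speedFactor P N a (c - S x ^ 2) * (-S x * √(turningFactor P N G a c (c - S x ^ 2)))) x := by
    refine (((hS x hx).pow 2).const_sub c).congr_deriv ?_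
    simp only [Nat.cast_ofNat]
    ring
  refine ⟨hpos, fun x hx => (hu x hx).hasDerivWithinAt, fun x hx => ?_, fun x hx => ?_⟩
  · have hroot := ((h.hasDerivAt_turningFactor hc₀ (hpos x hx)).comp x (hu x hx)).sqrt
      (by exact (hroot_pos x hx).ne')
    refine (((hS x hx).neg.mul hroot).congr_deriv ?_).hasDerivWithinAt
    rw [h.deriv_reducedPotential_eq hbc hc (hpos x hx)]
    have hsq := Real.sq_sqrt (hroot_pos x hx).le
    have hne := (Real.sqrt_pos.2 (hroot_pos x hx)).ne'
    simp only [Function.comp_apply, Pi.neg_apply]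
    field_simp
    linear_combination -speedFactor P N a (c - S x ^ 2) * hsq
  · rw [h.reducedPotential_eq_sub_mul hbc hc, mul_pow, Real.sq_sqrt (hroot_pos x hx).le]
    ring

lemma exists_isReducedSolution (h : IsTransonic P N G a b) (hbc : b < c)
    (hc : potential P N G a c = 0) {u₀ : ℝ} (hu₀ : u₀ ∈ Ioo 0 c) :
    ∃ l > 0, ∃ u w : ℝ → ℝ, IsReducedSolution P N G a l u w ∧ u 0 = u₀ ∧
      (∀ x ∈ Ico 0 l, 0 < w x) ∧ w l = 0 := by
  have hc₀ : 0 < c := hu₀.1.trans hu₀.2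
  have hσ₀ : √(c - u₀) ^ 2 = c - u₀ := Real.sq_sqrt (sub_pos.2 hu₀.2).le
  have hmem {σ : ℝ} (hσ : σ ∈ Icc (-√(c - u₀)) 0) : c - σ ^ 2 ∈ Ioc 0 c := by
    have : σ ^ 2 ≤ √(c - u₀) ^ 2 := sq_le_sq' hσ.1 (hσ.2.trans (Real.sqrt_nonneg _))
    exact ⟨by linarith [hu₀.1], sub_le_self c (sq_nonneg σ)⟩
  have hmaps : MapsTo (fun σ => c - σ ^ 2) (Icc (-√(c - u₀)) 0) (Ioi 0) :=
    fun σ hσ => (hmem hσ).1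
  have hsub_sq : ContinuousOn (fun σ : ℝ => c - σ ^ 2) (Icc (-√(c - u₀)) 0) := by fun_prop
  obtain ⟨l, hl, S, hS_mono, hS₀, hSl, hS⟩ := exists_hasDerivAt_Icc_transit
    (q := fun σ => √(turningFactor P N G a c (c - σ ^ 2)) * speedFactor P N a (c - σ ^ 2) / 2)
    (neg_lt_zero.2 (Real.sqrt_pos.2 (sub_pos.2 hu₀.2)))
    ((((h.contDiffOn_turningFactor hc₀).continuousOn.comp hsub_sq hmaps).sqrt.mul
      (h.contDiffOn_speedFactor.continuousOn.comp hsub_sq hmaps)).div_const 2)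
    fun σ hσ => half_pos (mul_pos (Real.sqrt_pos.2 (h.turningFactor_pos hbc hc (hmem hσ)))
      (h.speedFactor_pos (hmem hσ).1))
  have hS_mem {x : ℝ} (hx : x ∈ Icc 0 l) : S x ∈ Icc (-√(c - u₀)) 0 :=
    ⟨hS₀ ▸ hS_mono.monotone hx.1, hSl ▸ hS_mono.monotone hx.2⟩
  refine ⟨l, hl, _, _, h.isReducedSolution_of_sub_sq hbc hc (fun x hx => (hmem (hS_mem hx)).1) hS,
    ?_, fun x hx => ?_, ?_⟩
  · rw [hS₀, neg_sq, hσ₀, sub_sub_cancel]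
  · refine mul_pos (neg_pos.2 (hSl ▸ hS_mono hx.2)) (Real.sqrt_pos.2 ?_)
    exact h.turningFactor_pos hbc hc (hmem (hS_mem (Ico_subset_Icc_self hx)))
  · rw [hSl, neg_zero, zero_mul]

end IsTransonic

lemma IsSolution.eq_of_isReducedSolution (h : IsTransonic P N G a b) {T : ℝ} {v F : ℝ → ℝ}
    (hs : IsSolution P N G T v F) (hT : 0 < T) (hr : IsReducedSolution P N G a l u w) (hl : 0 < l)
    (hu₀a : u 0 ≠ a) (hv₀ : v 0 = u 0) (hF₀ : F 0 = (u 0 - a) * w 0) :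
    ∀ x ∈ Icc 0 (min l T), v x = u x ∧ F x = (u x - a) * w x := by
  intro x hx
  have henergy : F 0 ^ 2 / 2 = potential P N G a (v 0) := by
    rw [hF₀, hv₀, h.potential_eq, ← hr.energy 0 ⟨le_rfl, hl.le⟩, mul_pow]
  have hrv := hs.isReducedSolution h hT henergy
  have hw₀ : reducedField P N a T v 0 = w 0 := by
    refine mul_left_cancel₀ (sub_ne_zero.2 hu₀a) ?_
    rw [← hF₀, ← hv₀]
    exact hs.sub_mul_reducedField h ⟨le_rfl, hT.le⟩
  obtain ⟨hv, hw⟩ := Prod.mk.inj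
    (IsReducedSolution.eqOn h (hrv.mono (min_le_right l T)) (hr.mono (min_le_left l T)) hv₀ hw₀ hx)
  exact ⟨hv, by rw [← hs.sub_mul_reducedField h ⟨hx.1, hx.2.trans (min_le_right l T)⟩, hv, hw]⟩

theorem IsTransonic.exists_unique_accelerating_solution {u₀ E₀ : ℝ} (h : IsTransonic P N G a b)
    (hbc : b < c) (hc : potential P N G a c = 0) (hu₀ : 0 < u₀)
    (henergy : E₀ ^ 2 / 2 = potential P N G a u₀) (hacc : 0 ≤ (u₀ - a) * E₀) (hE₀ : E₀ ≠ 0) :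
    ∃ l > 0, ∃ u E : ℝ → ℝ, IsSolution P N G l u E ∧ u 0 = u₀ ∧ E 0 = E₀ ∧
      (∀ x ∈ Ico 0 l, 0 < derivWithin u (Icc 0 l) x) ∧
      Tendsto (derivWithin u (Icc 0 l)) (𝓝[<] l) (𝓝 0) ∧
      ∀ T > 0, ∀ v F : ℝ → ℝ, IsSolution P N G T v F → v 0 = u₀ → F 0 = E₀ →
        ∀ x ∈ Icc 0 (min l T), v x = u x ∧ F x = E x := by
  have hpot : 0 < potential P N G a u₀ := henergy ▸ half_pos (sq_pos_of_ne_zero hE₀)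
  have hu₀a : u₀ ≠ a := by
    rintro rfl
    exact hpot.ne' integral_same
  have hu₀c : u₀ < c := lt_of_not_ge fun hcu₀ => hpot.not_ge
    (hc ▸ h.strictAntiOn_potential_supersonic.antitoneOn hbc.le (hbc.le.trans hcu₀) hcu₀)
  obtain ⟨l, hl, u, w, hr, rfl, hw_pos, hwl⟩ := h.exists_isReducedSolution hbc hc ⟨hu₀, hu₀c⟩
  have hE₀w : (u 0 - a) * w 0 = E₀ := by
    rw [h.potential_eq, ← hr.energy 0 ⟨le_rfl, hl.le⟩] at henergy
    refine mul_left_cancel₀ (sub_ne_zero.2 hu₀a) ((sq_eq_sq₀ ?_ hacc).1 ?_)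
    · rw [← mul_assoc]
      exact mul_nonneg (mul_self_nonneg _) (hw_pos 0 ⟨le_rfl, hl⟩).le
    · linear_combination -2 * (u 0 - a) ^ 2 * henergy
  have hs := hr.isSolution h hl
  have hderiv {x : ℝ} (hx : x ∈ Icc 0 l) :
      derivWithin u (Icc 0 l) x = speedFactor P N a (u x) * w x :=
    (hr.hasDeriv_u x hx).derivWithin (uniqueDiffOn_Icc hl x hx)
  refine ⟨l, hl, u, fun x => (u x - a) * w x, hs, rfl, hE₀w, fun x hx => ?_, ?_,
    fun T hT v F hsv hv₀ hF₀ =>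
      hsv.eq_of_isReducedSolution h hT hr hl hu₀a hv₀ (hF₀.trans hE₀w.symm)⟩
  · rw [hderiv (Ico_subset_Icc_self hx)]
    exact mul_pos (h.speedFactor_pos (hr.pos x (Ico_subset_Icc_self hx))) (hw_pos x hx)
  · have hcont := hs.smooth_u.continuousOn_derivWithin (uniqueDiffOn_Icc hl) (by simp) l
      (right_mem_Icc.2 hl.le)
    rw [ContinuousWithinAt, hderiv (right_mem_Icc.2 hl.le), hwl, mul_zero] at hcont
    exact hcont.mono_left (nhdsWithin_le_of_mem (Icc_mem_nhdsLT hl))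

end Transonic

section EulerPoisson

variable {γ a J ρ : ℝ}

lemma isTransonic_eulerPoisson (hγ : -1 < γ) (ha : 0 < a) (hρ : 0 < ρ) (haJ : a < J / ρ) :
    IsTransonic (fun t => t ^ (γ + 1) - a ^ (γ + 1)) (fun t => t ^ γ) (fun t => J / t - ρ) a
      (J / ρ) where
  sonic_pos := ha
  sonic_lt := haJ
  contDiffOn_P := contDiffOn_id.rpow_const_of_ne (fun _ ht => ht.ne') |>.sub contDiffOn_const
  contDiffOn_N := contDiffOn_id.rpow_const_of_ne fun _ ht => ht.ne'
  contDiffOn_G := (contDiffOn_const.div contDiffOn_id fun _ ht => ht.ne').sub contDiffOn_const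
  P_sonic := sub_self _
  deriv_P_pos t ht := by
    rw [deriv_sub_const, Real.deriv_rpow_const]
    exact mul_pos (by linarith) (Real.rpow_pos_of_pos ht _)
  N_pos t ht := Real.rpow_pos_of_pos ht γ
  G_pos t ht htJ := sub_pos.2 ((lt_div_comm₀ hρ ht).2 htJ)
  G_neg t htJ := sub_neg.2 ((div_lt_comm₀ (((ha.trans haJ)).trans htJ) hρ).2 htJ)

lemma eulerPoisson_integrand_eq (ha : 0 < a) {t : ℝ} (ht : 0 < t) :
    (t ^ (γ + 1) - a ^ (γ + 1)) * (J / t - ρ) / t ^ γ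
      = (1 - (a / t) ^ (γ + 1)) * (J - ρ * t) := by
  have htγ : t ^ γ ≠ 0 := (Real.rpow_pos_of_pos ht γ).ne'
  rw [Real.div_rpow ha.le ht.le, Real.rpow_add_one ht.ne']
  field_simp

lemma exists_potential_eulerPoisson_eq_zero (hγ : -1 < γ) (ha : 0 < a) (hρ : 0 < ρ)
    (haJ : a < J / ρ) : ∃ c > J / ρ,
      potential (fun t => t ^ (γ + 1) - a ^ (γ + 1)) (fun t => t ^ γ) (fun t => J / t - ρ) a c
        = 0 := by
  have hb : 0 < J / ρ := ha.trans haJ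
  have hγ' : 0 < γ + 1 := by linarith
  have hratio : (a / (J / ρ)) ^ (γ + 1) < 1 :=
    Real.rpow_lt_one (by positivity) ((div_lt_one hb).2 haJ) hγ'
  refine (isTransonic_eulerPoisson hγ ha hρ haJ).exists_potential_eq_zero
    (mul_pos (sub_pos.2 hratio) hρ) (le_add_of_nonneg_right zero_le_one) fun t ht => ?_
  have hbt : J / ρ < t := (lt_add_one _).trans ht
  have ht₀ : 0 < t := hb.trans hbt
  rw [eulerPoisson_integrand_eq ha ht₀, neg_mul_eq_mul_neg]
  have hratio_le : (a / t) ^ (γ + 1) ≤ (a / (J / ρ)) ^ (γ + 1) := by gcongr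
  have hdoping : J - ρ * t ≤ -ρ := by
    have : ρ * (J / ρ + 1) ≤ ρ * t := by gcongr
    rw [mul_add, mul_div_cancel₀ _ hρ.ne'] at this
    linarith
  nlinarith

lemma usonic_pos {S₀ : ℝ} (hγ : 0 < γ) (hS₀ : 0 < S₀) (hJ : 0 < J) : 0 < usonic γ S₀ J :=
  Real.rpow_pos_of_pos (mul_pos (mul_pos hγ hS₀) (Real.rpow_pos_of_pos hJ _)) _

lemma Hfun_eq_potential {S₀ u : ℝ} (hρ : ρ ≠ 0) (hJ : J ≠ 0) (ha : 0 < usonic γ S₀ J)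
    (hu : 0 < u) :
    Hfun γ ρ S₀ J u = potential (fun t => t ^ (γ + 1) - usonic γ S₀ J ^ (γ + 1))
      (fun t => t ^ γ) (fun t => J / t - ρ) (usonic γ S₀ J) u := by
  rw [Hfun, potential, ← integral_const_mul]
  refine integral_congr fun t ht => ?_
  have ht₀ : 0 < t := ordConnected_Ioi.uIcc_subset ha hu ht
  simp only [uIn, div_div_cancel₀ hJ, Real.rpow_neg ht₀.le, Real.rpow_add_one ht₀.ne']
  field_simp

lemma ne_zero_of_mem_critTraj_of_lt_usonic {S₀ u₀ E₀ : ℝ} (hγ : 0 < γ) (hρ : 0 < ρ) (hS₀ : 0 < S₀)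
    (hJ : 0 < J) (hζ₀ : 1 < uIn ρ J / usonic γ S₀ J) (hmem : (u₀, E₀) ∈ critTraj γ ρ S₀ J)
    (hu₀ : u₀ < usonic γ S₀ J) : E₀ ≠ 0 := by
  obtain ⟨hpos, henergy⟩ := hmem
  have ha := usonic_pos hγ hS₀ hJ
  have hH := (isTransonic_eulerPoisson (by linarith : -1 < γ) ha hρ
    ((one_lt_div ha).1 hζ₀)).potential_pos_of_lt_sonic hpos hu₀
  rw [← Hfun_eq_potential hρ.ne' hJ.ne' ha hpos, ← sub_eq_zero.1 henergy] at hH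
  rintro rfl
  norm_num at hH

/-- A smooth solution of the one-dimensional steady Euler–Poisson system on `[0, l]`, in the
multiplied form that makes sense at the sonic speed. -/
abbrev IsEulerPoissonSolution (γ ρ S₀ J : ℝ) : ℝ → (ℝ → ℝ) → (ℝ → ℝ) → Prop :=
  IsSolution (fun t => t ^ (γ + 1) - usonic γ S₀ J ^ (γ + 1)) (fun t => t ^ γ) fun t => J / t - ρ

theorem stmt6_general {S₀ u₀ E₀ : ℝ} (hγ : 0 < γ) (hρ : 0 < ρ) (hS₀ : 0 < S₀) (hJ : 0 < J)
    (hζ₀ : 1 < uIn ρ J / usonic γ S₀ J) (hinit : (u₀, E₀) ∈ critTrajAcc γ ρ S₀ J) (hE₀ : E₀ ≠ 0) :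
    ∃ l > 0, ∃ u E : ℝ → ℝ, IsEulerPoissonSolution γ ρ S₀ J l u E ∧ u 0 = u₀ ∧ E 0 = E₀ ∧
      (∀ x ∈ Ico 0 l, 0 < derivWithin u (Icc 0 l) x) ∧
      Tendsto (derivWithin u (Icc 0 l)) (𝓝[<] l) (𝓝 0) ∧
      ∀ T > 0, ∀ v F : ℝ → ℝ, IsEulerPoissonSolution γ ρ S₀ J T v F → v 0 = u₀ → F 0 = E₀ →
        ∀ x ∈ Icc 0 (min l T), v x = u x ∧ F x = E x := by
  obtain ⟨⟨hu₀, henergy⟩, hacc⟩ := hinit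
  have ha := usonic_pos hγ hS₀ hJ
  have haJ : usonic γ S₀ J < J / ρ := (one_lt_div ha).1 hζ₀
  obtain ⟨c, hbc, hc⟩ := exists_potential_eulerPoisson_eq_zero (by linarith : -1 < γ) ha hρ haJ
  exact (isTransonic_eulerPoisson (by linarith) ha hρ haJ).exists_unique_accelerating_solution
    hbc hc hu₀ (Hfun_eq_potential hρ.ne' hJ.ne' ha hu₀ ▸ sub_eq_zero.1 henergy) hacc hE₀

end EulerPoisson

/-- Lemma 1.1 (existence part): for initial data on the accelerating critical trajectory
with `0 < u₀ < u_s`, there is a finite `l_max > 0` and a unique smooth accelerating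
solution of the one-dimensional steady Euler–Poisson system on `[0, l_max]` whose speed
is strictly increasing on `[0, l_max)` and whose acceleration vanishes at `l_max`. -/
theorem stmt6
    (γ ρin S₀ J u₀ E₀ : ℝ)
    (hγ : 1 < γ) (hρin : 0 < ρin) (hS₀ : 0 < S₀) (hJ : 0 < J)
    (hζ₀ : 1 < uIn ρin J / usonic γ S₀ J)
    (hinit : (u₀, E₀) ∈ critTrajAcc γ ρin S₀ J)
    (hu₀ : 0 < u₀) (hu₀s : u₀ < usonic γ S₀ J) :
    ∃ lmax : ℝ, 0 < lmax ∧
      ∃ u E : ℝ → ℝ,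
        ContDiffOn ℝ (⊤ : ℕ∞) u (Icc 0 lmax) ∧ ContDiffOn ℝ (⊤ : ℕ∞) E (Icc 0 lmax) ∧
        (∀ x ∈ Icc (0:ℝ) lmax, 0 < u x) ∧
        u 0 = u₀ ∧ E 0 = E₀ ∧
        (∀ x ∈ Icc (0:ℝ) lmax,
          (u x ^ (γ + 1) - usonic γ S₀ J ^ (γ + 1)) * derivWithin u (Icc 0 lmax) x
            = E x * u x ^ γ ∧
          derivWithin E (Icc 0 lmax) x = J / u x - ρin) ∧
        -- (i) strictly accelerating before l_max
        (∀ x ∈ Ico (0:ℝ) lmax, 0 < derivWithin u (Icc 0 lmax) x) ∧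
        -- (ii) the acceleration vanishes at l_max
        Tendsto (derivWithin u (Icc 0 lmax)) (nhdsWithin lmax (Iio lmax)) (nhds 0) ∧
        -- uniqueness: any smooth solution with the same data agrees on the common interval
        (∀ T' : ℝ, 0 < T' → ∀ v F : ℝ → ℝ,
          ContDiffOn ℝ (⊤ : ℕ∞) v (Icc 0 T') → ContDiffOn ℝ (⊤ : ℕ∞) F (Icc 0 T') →
          (∀ x ∈ Icc (0:ℝ) T', 0 < v x) →
          v 0 = u₀ → F 0 = E₀ →
          (∀ x ∈ Icc (0:ℝ) T',
            (v x ^ (γ + 1) - usonic γ S₀ J ^ (γ + 1)) * derivWithin v (Icc 0 T') x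
              = F x * v x ^ γ ∧
            derivWithin F (Icc 0 T') x = J / v x - ρin) →
          ∀ x ∈ Icc (0:ℝ) (min lmax T'), v x = u x ∧ F x = E x) := by
  obtain ⟨l, hl, u, E, hs, hu, hE, haccel, hlim, hunique⟩ :=
    stmt6_general (zero_lt_one.trans hγ) hρin hS₀ hJ hζ₀ hinit
      (ne_zero_of_mem_critTraj_of_lt_usonic (zero_lt_one.trans hγ) hρin hS₀ hJ hζ₀ hinit.1 hu₀s)
  exact ⟨l, hl, u, E, hs.smooth_u, hs.smooth_E, hs.pos, hu, hE, hs.ode, haccel, hlim,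
    fun T hT v F hv hF hpos hv₀ hF₀ hode => hunique T hT v F ⟨hv, hF, hpos, hode⟩ hv₀ hF₀⟩
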